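/- Algorithm LR with parameter β is (2β+1)-competitive for interval selection with proportional weights when β ≥ φ = (1+√5)/2: for every real β ≥ (1+√5)/2, every instance, and every maximum-weight feasible set OPT, the solution produced by LR satisfies OPT ≤ (2β+1)·ALG. -/

import Mathlib

attribute [local instance] Classical.propDecidable

noncomputable section

/-- An interval `I = (s, f)` with `s < f`, occupying `[s, f)`. -/
structure Ivl where
  s : ℝ
  f : ℝ
  lt : s < f

namespace Ivl

/-- The set of points occupied by an interval: the half-open set `[s, f)`. -/
def occ (I : Ivl) : Set ℝ := Set.Ico I.s I.f

/-- The length of an interval, `f - s` (also its proportional weight). -/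
def len (I : Ivl) : ℝ := I.f - I.s

end Ivl

/-- Two intervals conflict if their occupied sets intersect. -/
def Conflict (I J : Ivl) : Prop := (I.occ ∩ J.occ).Nonempty

/-- A set of intervals is feasible if its elements are pairwise disjoint. -/
def Feasible (S : Finset Ivl) : Prop :=
  ∀ I ∈ S, ∀ J ∈ S, I ≠ J → ¬ Conflict I J

/-- The total (proportional) weight of a finite set of intervals. -/
def wsum (S : Finset Ivl) : ℝ := ∑ I ∈ S, I.len

/-- `opt` is a maximum-weight feasible subset of the instance's intervals,
for proportional weights. -/
def IsMaxWeightOpt (inst : List Ivl) (opt : Finset Ivl) : Prop :=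
  (∀ I ∈ opt, I ∈ inst) ∧ Feasible opt ∧
    ∀ T : Finset Ivl, (∀ I ∈ T, I ∈ inst) → Feasible T → wsum T ≤ wsum opt

/-- One step of algorithm `LR` with parameter `β` upon the arrival of `I`:
accept `I` (displacing its conflicts) iff its weight exceeds `β` times the
largest weight of a conflicting interval in the solution (0 if none). -/
def lrStep (β : ℝ) (S : Finset Ivl) (I : Ivl) : Finset Ivl :=
  let Is := S.filter (fun J => Conflict I J)
  if I.len > β * (if h : Is.Nonempty then Is.sup' h Ivl.len else 0) then
    insert I (S \ Is)
  else S

/-- The solution produced by algorithm `LR` with parameter `β`. -/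
def lr (β : ℝ) (inst : List Ivl) : Finset Ivl :=
  inst.foldl (lrStep β) ∅

/-!
Every arrived interval stays inside the union of the enlargements `[s - β w, f + β w)` of the
intervals in the current solution. A rejected interval is too short to leave the enlargement of a
conflicting one; and when `J` is displaced by `I`, we have `β w(J) < w(I)`, so the enlargement of
`J`, which reaches at most `(1 + β) w(J) ≤ β² w(J) ≤ β w(I)` beyond `I`, is inside that of `I`.
The inequality `1 + β ≤ β²` is where the golden ratio enters. The bound follows by comparing
Lebesgue measures: an enlargement has measure `(2β + 1) w`.
-/

open MeasureTheory

namespace Ivl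

theorem len_pos (I : Ivl) : 0 < I.len := sub_pos.2 I.lt

/-- The interval `I` enlarged on both sides by `β` times its length: the points that `I` accounts
for in the analysis of `LR` when it belongs to the solution. -/
def enlarge (β : ℝ) (I : Ivl) : Set ℝ := Set.Ico (I.s - β * I.len) (I.f + β * I.len)

theorem occ_subset_enlarge {β : ℝ} (hβ : 0 ≤ β) (I : Ivl) : I.occ ⊆ I.enlarge β :=
  have hmargin : 0 ≤ β * I.len := mul_nonneg hβ I.len_pos.le
  Set.Ico_subset_Ico (by linarith) (by linarith)

theorem volume_real_occ (I : Ivl) : volume.real I.occ = I.len :=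
  Real.volume_real_Ico_of_le I.lt.le

theorem volume_real_enlarge {β : ℝ} (hβ : 0 ≤ β) (I : Ivl) :
    volume.real (I.enlarge β) = (2 * β + 1) * I.len := by
  have hle : I.s - β * I.len ≤ I.f + β * I.len := by
    linarith [I.lt, mul_nonneg hβ I.len_pos.le]
  rw [enlarge, Real.volume_real_Ico_of_le hle, len]
  ring

end Ivl

namespace Conflict

variable {β : ℝ} {I J : Ivl}

theorem lt_and_lt (h : Conflict I J) : I.s < J.f ∧ J.s < I.f := by
  obtain ⟨x, hI, hJ⟩ := h
  exact ⟨hI.1.trans_lt hJ.2, hJ.1.trans_lt hI.2⟩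

theorem occ_subset_enlarge (h : Conflict I J) (hlen : I.len ≤ β * J.len) :
    I.occ ⊆ J.enlarge β := by
  obtain ⟨hIJ, hJI⟩ := h.lt_and_lt
  have hI : I.len = I.f - I.s := rfl
  exact Set.Ico_subset_Ico (by linarith) (by linarith)

theorem enlarge_subset_enlarge (h : Conflict I J) (hlen : (1 + β) * J.len ≤ β * I.len) :
    J.enlarge β ⊆ I.enlarge β := by
  obtain ⟨hIJ, hJI⟩ := h.lt_and_lt
  have hJ : J.len = J.f - J.s := rfl
  exact Set.Ico_subset_Ico (by linarith) (by linarith)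

end Conflict

theorem Feasible.volume_real_biUnion_occ {T : Finset Ivl} (hT : Feasible T) :
    volume.real (⋃ I ∈ T, I.occ) = wsum T := by
  have hdisj : (T : Set Ivl).PairwiseDisjoint Ivl.occ := fun I hI J hJ hne =>
    Set.disjoint_iff_inter_eq_empty.2 (Set.not_nonempty_iff_eq_empty.1 (hT I hI J hJ hne))
  rw [measureReal_biUnion_finset hdisj (fun _ _ => measurableSet_Ico)
    (fun _ _ => measure_Ico_lt_top.ne)]
  exact Finset.sum_congr rfl fun I _ => I.volume_real_occ

/-- The union of the enlargements of the intervals of `S`: the region that the solution `S`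
accounts for in the analysis of `LR`. -/
def shadow (β : ℝ) (S : Finset Ivl) : Set ℝ := ⋃ A ∈ S, A.enlarge β

section Shadow

variable {β : ℝ} {S : Finset Ivl}

theorem enlarge_subset_shadow {A : Ivl} (hA : A ∈ S) : A.enlarge β ⊆ shadow β S :=
  Set.subset_biUnion_of_mem (u := Ivl.enlarge β) hA

theorem volume_shadow_ne_top : volume (shadow β S) ≠ ⊤ :=
  (measure_biUnion_lt_top S.finite_toSet fun _ _ => measure_Ico_lt_top).ne

theorem volume_real_shadow_le (hβ : 0 ≤ β) :
    volume.real (shadow β S) ≤ (2 * β + 1) * wsum S :=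
  calc volume.real (shadow β S)
      ≤ ∑ A ∈ S, volume.real (A.enlarge β) := measureReal_biUnion_finset_le S _
    _ = ∑ A ∈ S, (2 * β + 1) * A.len := Finset.sum_congr rfl fun A _ => A.volume_real_enlarge hβ
    _ = (2 * β + 1) * wsum S := (Finset.mul_sum S _ _).symm

theorem Feasible.wsum_le_of_subset_shadow {T : Finset Ivl} (hT : Feasible T) (hβ : 0 ≤ β)
    (hsub : ∀ I ∈ T, I.occ ⊆ shadow β S) : wsum T ≤ (2 * β + 1) * wsum S :=
  calc wsum T = volume.real (⋃ I ∈ T, I.occ) := hT.volume_real_biUnion_occ.symm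
    _ ≤ volume.real (shadow β S) :=
      measureReal_mono (Set.iUnion₂_subset hsub) volume_shadow_ne_top
    _ ≤ (2 * β + 1) * wsum S := volume_real_shadow_le hβ

end Shadow

section Step

variable {β : ℝ} (S : Finset Ivl) (I : Ivl)

theorem lrStep_eq_ite (hβ : 0 ≤ β) :
    lrStep β S I =
      if ∀ J ∈ S, Conflict I J → β * J.len < I.len then
        insert I (S.filter fun J => ¬Conflict I J)
      else S := by
  simp only [lrStep, Finset.filter_not]
  refine if_congr ?_ rfl rfl
  split_ifs with hne
  · rw [gt_iff_lt, Finset.mul₀_sup' hβ, Finset.sup'_lt_iff]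
    simp only [Finset.mem_filter, and_imp]
  · simp only [Finset.not_nonempty_iff_eq_empty, Finset.filter_eq_empty_iff] at hne
    simp only [mul_zero, gt_iff_lt, I.len_pos, true_iff]
    exact fun J hJ hconf => absurd hconf (hne hJ)

theorem occ_subset_shadow_lrStep (hβ : 0 ≤ β) : I.occ ⊆ shadow β (lrStep β S I) := by
  rw [lrStep_eq_ite S I hβ]
  split_ifs with haccept
  · exact (I.occ_subset_enlarge hβ).trans (enlarge_subset_shadow (Finset.mem_insert_self I _))
  · push Not at haccept
    obtain ⟨J, hJ, hconf, hlen⟩ := haccept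
    exact (hconf.occ_subset_enlarge hlen).trans (enlarge_subset_shadow hJ)

theorem shadow_subset_shadow_lrStep (hβ : 0 ≤ β) (hsq : β + 1 ≤ β ^ 2) :
    shadow β S ⊆ shadow β (lrStep β S I) := by
  rw [lrStep_eq_ite S I hβ]
  split_ifs with haccept
  · refine Set.iUnion₂_subset fun J hJ => ?_
    by_cases hconf : Conflict I J
    · have hlen : (1 + β) * J.len ≤ β * I.len :=
        calc (1 + β) * J.len ≤ β ^ 2 * J.len := by
              gcongr
              · exact J.len_pos.le
              · linarith
          _ = β * (β * J.len) := by ring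
          _ ≤ β * I.len := mul_le_mul_of_nonneg_left (haccept J hJ hconf).le hβ
      exact (hconf.enlarge_subset_enlarge hlen).trans
        (enlarge_subset_shadow (Finset.mem_insert_self I _))
    · exact enlarge_subset_shadow (Finset.mem_insert_of_mem (Finset.mem_filter.2 ⟨hJ, hconf⟩))
  · exact subset_rfl

end Step

theorem shadow_subset_shadow_foldl_lrStep {β : ℝ} (hβ : 0 ≤ β) (hsq : β + 1 ≤ β ^ 2)
    (l : List Ivl) (S : Finset Ivl) : shadow β S ⊆ shadow β (l.foldl (lrStep β) S) := by
  induction l generalizing S with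
  | nil => exact subset_rfl
  | cons I l ih => exact (shadow_subset_shadow_lrStep S I hβ hsq).trans (ih _)

theorem occ_subset_shadow_lr {β : ℝ} (hβ : 0 ≤ β) (hsq : β + 1 ≤ β ^ 2) {inst : List Ivl}
    {I : Ivl} (hI : I ∈ inst) : I.occ ⊆ shadow β (lr β inst) := by
  obtain ⟨before, after, rfl⟩ := List.append_of_mem hI
  rw [lr, List.foldl_append, List.foldl_cons]
  exact (occ_subset_shadow_lrStep _ I hβ).trans
    (shadow_subset_shadow_foldl_lrStep hβ hsq after _)

theorem add_one_le_sq_of_goldenRatio_le {β : ℝ} (hβ : Real.goldenRatio ≤ β) :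
    β + 1 ≤ β ^ 2 := by
  nlinarith [Real.goldenRatio_sq, Real.one_lt_goldenRatio]

theorem lr_competitive_general (β : ℝ) (hβ : (1 + Real.sqrt 5) / 2 ≤ β) (inst : List Ivl)
    (T : Finset Ivl) (hmem : ∀ I ∈ T, I ∈ inst) (hT : Feasible T) :
    wsum T ≤ (2 * β + 1) * wsum (lr β inst) := by
  have hβ_nonneg : 0 ≤ β := Real.goldenRatio_pos.le.trans hβ
  have hsq : β + 1 ≤ β ^ 2 := add_one_le_sq_of_goldenRatio_le hβ
  exact hT.wsum_le_of_subset_shadow hβ_nonneg fun I hI =>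
    occ_subset_shadow_lr hβ_nonneg hsq (hmem I hI)

theorem lr_competitive
    (β : ℝ) (hβ : (1 + Real.sqrt 5) / 2 ≤ β)
    (inst : List Ivl) (hdist : inst.Nodup)
    (opt : Finset Ivl) (hopt : IsMaxWeightOpt inst opt) :
    wsum opt ≤ (2 * β + 1) * wsum (lr β inst) :=
  lr_competitive_general β hβ inst opt hopt.1 hopt.2.1
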